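/- Let G be a single-decision causal influence diagram with decision D and let X be a variable of G other than D. Then G is compatible with a response incentive on X if and only if there exist a parent W of D and a utility node U such that: (1) G contains a directed path from X to W, (2) G contains a directed path from D to U, and (3) W is d-connected to U given the remaining family of D, i.e. W is not d-separated from U by ({D} ∪ Pa_D) \ {W}. -/

import Mathlib

attribute [local instance] Classical.propDecidable

noncomputable section

/-! ### d-separation in a directed graph -/

/-- `b` is a collider on a path segment `a - b - c`. -/
def IsCollider {V : Type} (E : V → V → Prop) (a b c : V) : Prop := E a b ∧ E c b

/-- The triple `a - b - c` on an undirected path blocks the path w.r.t. `Z`: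
either the middle node is a non-collider (chain or fork) belonging to `Z`, or it is a
collider such that neither it nor any of its descendants belongs to `Z`. -/
def BlockedTriple {V : Type} (E : V → V → Prop) (Z : Set V) (a b c : V) : Prop :=
  (¬ IsCollider E a b c ∧ b ∈ Z) ∨
    (IsCollider E a b c ∧ ∀ w, Relation.ReflTransGen E b w → w ∉ Z)

/-- An undirected path: a nonempty list of distinct vertices in which consecutive
vertices are joined by an edge in one direction or the other. -/
def IsUPath {V : Type} (E : V → V → Prop) (p : List V) : Prop :=
  p ≠ [] ∧ p.Nodup ∧ p.Chain' (fun a b => E a b ∨ E b a)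

/-- A path is d-separated (blocked) by `Z` if some consecutive triple blocks it. -/
def BlockedPath {V : Type} (E : V → V → Prop) (Z : Set V) (p : List V) : Prop :=
  ∃ l₁ a b c l₂, p = l₁ ++ a :: b :: c :: l₂ ∧ BlockedTriple E Z a b c

/-- `Z` d-separates the node sets `S` and `T`: every undirected path from a node of `S`
to a node of `T` is blocked by `Z`. -/
def DSep {V : Type} (E : V → V → Prop) (S T Z : Set V) : Prop :=
  ∀ p : List V, IsUPath E p → (∃ s ∈ S, p.head? = some s) →
    (∃ t ∈ T, p.getLast? = some t) → BlockedPath E Z p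

/-! ### Causal influence diagrams and structural causal influence models -/

/-- A single-decision causal influence diagram: a finite DAG whose vertices are
partitioned into structure nodes, one decision node and utility nodes
(the utility nodes having no children). -/
structure CID (V : Type) where
  edge : V → V → Prop
  acyclic : ∀ v, ¬ Relation.TransGen edge v v
  decision : V
  utility : Finset V
  decision_not_utility : decision ∉ utility
  utility_no_children : ∀ u ∈ utility, ∀ v, ¬ edge u v

/-- A (single-decision) structural causal influence model over a CID: finite nonempty
domains for every variable, one finite-domain exogenous variable per variable, structural
functions for every non-decision variable, real-valued (injectively embedded, i.e. the
domain is a subset of ℝ) utility variables, and mutually independent exogenous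
distributions. -/
structure SCIM (V : Type) extends CID V where
  dom : V → Type
  dom_fintype : ∀ v, Fintype (dom v)
  dom_nonempty : ∀ v, Nonempty (dom v)
  edom : V → Type
  edom_fintype : ∀ v, Fintype (edom v)
  edom_nonempty : ∀ v, Nonempty (edom v)
  utilVal : ∀ v, dom v → ℝ
  utilVal_inj : ∀ v ∈ utility, Function.Injective (utilVal v)
  f : ∀ v, v ≠ decision → (∀ w, edge w v → dom w) → edom v → dom v
  μ : ∀ v, edom v → ℝ
  μ_nonneg : ∀ v e, 0 ≤ μ v e
  μ_sum : ∀ v, ∑ e ∈ @Finset.univ (edom v) (edom_fintype v), μ v e = 1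

variable {V : Type} [Fintype V] [DecidableEq V]

instance (M : SCIM V) (v : V) : Fintype (M.dom v) := M.dom_fintype v
instance (M : SCIM V) (v : V) : Nonempty (M.dom v) := M.dom_nonempty v
instance (M : SCIM V) (v : V) : Fintype (M.edom v) := M.edom_fintype v
instance (M : SCIM V) (v : V) : Nonempty (M.edom v) := M.edom_nonempty v

namespace SCIM

variable (M : SCIM V)

/-- A joint setting of the exogenous variables. -/
abbrev Env := ∀ v, M.edom v

/-- Joint probability of an exogenous setting (the exogenous variables are independent). -/
def prob (ε : M.Env) : ℝ := ∏ v, M.μ v (ε v)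

/-- The type of structural mechanisms for the vertex `v`. -/
def Mechanism (v : V) : Type := (∀ w, M.edge w v → M.dom w) → M.edom v → M.dom v

/-- A policy: a structural function for the decision node. -/
abbrev Policy := M.Mechanism M.decision

theorem edge_wf : WellFounded M.edge := by
  haveI : IsTrans V (Relation.TransGen M.edge) := ⟨fun _ _ _ h h' => h.trans h'⟩
  haveI : IsIrrefl V (Relation.TransGen M.edge) := ⟨M.acyclic⟩
  exact Subrelation.wf (fun h => Relation.TransGen.single h)
    (Finite.wellFounded_of_trans_of_irrefl _)

/-- The unique solution of the structural equations `mech` given exogenous setting `ε`. -/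
def solve (mech : ∀ v, M.Mechanism v) (ε : M.Env) : ∀ v, M.dom v :=
  WellFounded.fix (C := fun v => M.dom v) M.edge_wf
    (fun v IH => mech v (fun w hw => IH w hw) (ε v))

/-- The mechanisms of the SCM `M_π` obtained by fixing the policy `π`. -/
def polMech (π : M.Policy) : ∀ v, M.Mechanism v :=
  fun v => if h : v = M.decision then cast (congrArg M.Mechanism h).symm π else M.f v h

/-- Apply an intervention (a partial assignment `ι` of values) to mechanisms:
intervened variables are set to constants. -/
def doMech (mech : ∀ v, M.Mechanism v) (ι : ∀ v, Option (M.dom v)) : ∀ v, M.Mechanism v :=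
  fun v => match ι v with
    | some x => fun _ _ => x
    | none => mech v

/-- The single intervention `do(X = x)` as a partial assignment. -/
def single (X : V) (x : M.dom X) : ∀ v, Option (M.dom v) :=
  fun v => if h : v = X then some (cast (congrArg M.dom h).symm x) else none

/-- The value `W(ε)` of each variable in `M_π`. -/
def val (π : M.Policy) (ε : M.Env) : ∀ v, M.dom v := M.solve (M.polMech π) ε

/-- The potential response: the value of each variable in the submodel of `M_π`
given by the intervention `ι`. -/
def valDo (π : M.Policy) (ι : ∀ v, Option (M.dom v)) (ε : M.Env) : ∀ v, M.dom v :=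
  M.solve (M.doMech (M.polMech π) ι) ε

/-- Total utility of an assignment of values to the variables. -/
def totUtil (a : ∀ v, M.dom v) : ℝ := ∑ v ∈ M.utility, M.utilVal v (a v)

/-- Expected total utility of the policy `π`. -/
def EU (π : M.Policy) : ℝ := ∑ ε : M.Env, M.prob ε * M.totUtil (M.val π ε)

/-- An optimal policy maximizes expected total utility. -/
def Optimal (π : M.Policy) : Prop := ∀ π' : M.Policy, M.EU π' ≤ M.EU π

/-- A decision context: a joint value of the parents of the decision. -/
abbrev Ctx := ∀ w, M.edge w M.decision → M.dom w

/-- The decision context realized by the exogenous setting `ε` in `M_π`. -/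
def ctx (π : M.Policy) (ε : M.Env) : M.Ctx := fun w _ => M.val π ε w

/-- Probability of a decision context in `M_π`. -/
def ctxProb (π : M.Policy) (pa : M.Ctx) : ℝ :=
  ∑ ε : M.Env, if M.ctx π ε = pa then M.prob ε else 0

/-- Conditional expectation of `g` given the decision context `pa` in `M_π`. -/
def condExp (π : M.Policy) (pa : M.Ctx) (g : M.Env → ℝ) : ℝ :=
  (∑ ε : M.Env, if M.ctx π ε = pa then M.prob ε * g ε else 0) / M.ctxProb π pa

/-- The nested potential response `𝒰_{X_d}(ε)`: total utility when `X` is set to the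
value it would take under `do(D = d)`, everything else following `M_π`. -/
def nestedU (π : M.Policy) (X : V) (d : M.dom M.decision) (ε : M.Env) : ℝ :=
  M.totUtil (M.valDo π (M.single X (M.valDo π (M.single M.decision d) ε X)) ε)

/-- Control incentive on `X`: under every optimal policy, in some positive-probability
decision context some alternative decision `d` changes expected utility through `X`. -/
def ControlIncentive (X : V) : Prop :=
  ∀ π : M.Policy, M.Optimal π →
    ∃ pa : M.Ctx, 0 < M.ctxProb π pa ∧ ∃ d : M.dom M.decision,
      M.condExp π pa (M.nestedU π X d) ≠
        M.condExp π pa (fun ε => M.totUtil (M.val π ε))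

/-- Response incentive on `X`: under every optimal policy some intervention on `X`
changes the decision for some exogenous setting. -/
def ResponseIncentive (X : V) : Prop :=
  ∀ π : M.Policy, M.Optimal π →
    ∃ (x : M.dom X) (ε : M.Env),
      M.valDo π (M.single X x) ε M.decision ≠ M.val π ε M.decision

/-- Conditional probability of `event` given `cond` in `M_π`. -/
def cprob (π : M.Policy) (event cond : M.Env → Prop) : ℝ :=
  (∑ ε : M.Env, if cond ε ∧ event ε then M.prob ε else 0) /
    (∑ ε : M.Env, if cond ε then M.prob ε else 0)

/-- Counterfactual fairness of a policy `π` with respect to a protected attribute `A`: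
conditional on any positive-probability decision context and value of `A`, intervening
on `A` does not change the distribution of the decision. -/
def CFair (π : M.Policy) (A : V) : Prop :=
  ∀ (d : M.dom M.decision) (pa : M.Ctx) (a a' : M.dom A),
    (0 < ∑ ε : M.Env, if M.ctx π ε = pa ∧ M.val π ε A = a then M.prob ε else 0) →
      M.cprob π (fun ε => M.valDo π (M.single A a') ε M.decision = d)
          (fun ε => M.ctx π ε = pa ∧ M.val π ε A = a) =
        M.cprob π (fun ε => M.val π ε M.decision = d)
          (fun ε => M.ctx π ε = pa ∧ M.val π ε A = a)

/-- Expected value of the sum of utility variables in `S`. -/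
def EUOn (S : Finset V) (π : M.Policy) : ℝ :=
  ∑ ε : M.Env, M.prob ε * ∑ v ∈ S, M.utilVal v (M.val π ε v)

/-- The policy obtained from `π` by replacing the observations of the decision-parents
that are descendants of `X` by the fixed values `p`. -/
def modPolicy (π : M.Policy) (X : V) (p : M.Ctx) : M.Policy :=
  fun pa e =>
    π (fun w hw => if Relation.ReflTransGen M.edge X w then p w hw else pa w hw) e

end SCIM

/-- The graphical criterion for control incentives: a directed path `D ⇝ X ⇝ U`
for some utility node `U`. -/
def CICriterion {V : Type} (G : CID V) (X : V) : Prop :=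
  Relation.ReflTransGen G.edge G.decision X ∧
    ∃ u ∈ G.utility, Relation.ReflTransGen G.edge X u

/-- The graphical criterion for response incentives: a directed path from `X` to some
parent `W` of the decision `D`, a directed path from `D` to some utility node `U`, and
`W` d-connected to `U` given `({D} ∪ Pa_D) \ {W}`. -/
def RICriterion {V : Type} (G : CID V) (X : V) : Prop :=
  ∃ W, G.edge W G.decision ∧ ∃ u ∈ G.utility,
    Relation.ReflTransGen G.edge X W ∧
    Relation.ReflTransGen G.edge G.decision u ∧
    ¬ DSep G.edge {W} {u} (({G.decision} ∪ {w | G.edge w G.decision}) \ {W})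

end

/-!
Soundness. Call a vertex relevant if it is an ancestor of the decision `D` or of a utility node
below `D`; making the other variables constant changes neither the decision nor the influenced
utility. In the Markov factorization of the resulting model, collect the factors whose family meets
a vertex linked to an influenced utility by a chain of overlapping families avoiding the family of
`D`. Once the linked vertices are summed out, these factors involve the context of `D` only through
the requisite observations, namely the parents of `D` lying in one of these families; the remaining
factors, apart from the policy, depend neither on the decision nor on the linked vertices. Hence
some optimal policy responds to the requisite observations only, and a response incentive on `X`
forces `X` to reach one of them. A requisite observation is d-connected to an influenced utility,
because the chain of overlapping families translates into an active path.

Completeness. Let `X ⇝ W` and take an active path from `W` to a utility node `U` below `D`. Let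
every source on the path draw a fair bit, let the other non-colliders pass the bit they receive
along the path, and let every collider broadcast the sum of its two incoming bits to its
descendants, so that `D` observes it. From these sums and the bit of `W`, the decision can recover
the bit arriving at `U`; as `U` rewards a correct guess, every optimal policy guesses correctly.
Setting `X` to a special absent value silences every observation below `X`, in particular `W`.
Changing the noise on the path from all zeros to all ones changes the bit arriving at `U`, but none
of the collider sums, so that under this intervention `D` sees no difference. Without it, an
optimal decision follows the bit at `U`, hence the decision responds to the intervention under one
of the two noises.
-/

/-! ### Structural equations -/

namespace CID

variable {V : Type} (G : CID V)

/-- `G.Reaches v w`: there is a directed path, possibly of length zero, from `v` to `w`. -/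
abbrev Reaches : V → V → Prop := Relation.ReflTransGen G.edge

end CID

namespace SCIM

variable {V : Type} (M : SCIM V)

theorem prob_nonneg [Fintype V] (ε : M.Env) : 0 ≤ M.prob ε :=
  Finset.prod_nonneg fun v _ => M.μ_nonneg v (ε v)

theorem polMech_of_ne [DecidableEq V] (π : M.Policy) {v : V} (h : v ≠ M.decision) :
    M.polMech π v = M.f v h :=
  dif_neg h

theorem polMech_decision [DecidableEq V] (π : M.Policy) : M.polMech π M.decision = π :=
  dif_pos rfl

theorem doMech_single_of_ne [DecidableEq V] (mech : ∀ v, M.Mechanism v) {X v : V} (x : M.dom X)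
    (h : v ≠ X) :
    M.doMech mech (M.single X x) v = mech v := by
  simp [doMech, single, h]

theorem doMech_single_self [DecidableEq V] (mech : ∀ v, M.Mechanism v) (X : V) (x : M.dom X) :
    M.doMech mech (M.single X x) X = fun _ _ => x := by
  simp only [doMech, single, dite_true]
  rfl

/-- The conditional probability that the variable `v`, governed by the mechanism `m`, takes the
value `x` when its parents take the values prescribed by the assignment `a`. -/
noncomputable def kernel {v : V} (m : M.Mechanism v) (a : ∀ w, M.dom w) (x : M.dom v) : ℝ :=
  ∑ e, if m (fun w _ => a w) e = x then M.μ v e else 0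

theorem kernel_nonneg {v : V} (m : M.Mechanism v) (a : ∀ w, M.dom w) (x : M.dom v) :
    0 ≤ M.kernel m a x :=
  Finset.sum_nonneg fun e _ => ite_nonneg (M.μ_nonneg v e) le_rfl

theorem sum_kernel {v : V} (m : M.Mechanism v) (a : ∀ w, M.dom w) : ∑ x, M.kernel m a x = 1 := by
  simp_rw [kernel]
  rw [Finset.sum_comm]
  simp_rw [Finset.sum_ite_eq, Finset.mem_univ, if_true]
  exact M.μ_sum v

theorem kernel_congr {v : V} (m : M.Mechanism v) {a a' : ∀ w, M.dom w}
    (h : ∀ w, M.edge w v → a w = a' w) (x : M.dom v) : M.kernel m a x = M.kernel m a' x := by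
  have : (fun w (_ : M.edge w v) => a w) = fun w _ => a' w := funext₂ h
  rw [kernel, kernel, this]

theorem kernel_deterministic {v : V} (g : (∀ w, M.edge w v → M.dom w) → M.dom v)
    (a : ∀ w, M.dom w) (x : M.dom v) :
    M.kernel (fun pa _ => g pa) a x = if g (fun w _ => a w) = x then 1 else 0 := by
  unfold kernel
  split_ifs
  · exact M.μ_sum v
  · exact Finset.sum_const_zero

variable [Fintype V] [DecidableEq V]

theorem solve_apply (mech : ∀ v, M.Mechanism v) (ε : M.Env) (v : V) :
    M.solve mech ε v = mech v (fun w _ => M.solve mech ε w) (ε v) := by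
  unfold solve
  rw [WellFounded.fix_eq]

theorem solve_eq_iff (mech : ∀ v, M.Mechanism v) (ε : M.Env) (a : ∀ v, M.dom v) :
    M.solve mech ε = a ↔ ∀ v, mech v (fun w _ => a w) (ε v) = a v := by
  refine ⟨?_, fun h => funext fun v => ?_⟩
  · rintro rfl v
    exact (M.solve_apply mech ε v).symm
  · induction v using M.edge_wf.induction with
    | _ v ih =>
      rw [solve_apply, ← h v]
      congr 1
      funext w hw
      exact ih w hw

theorem solve_congr {mech mech' : ∀ v, M.Mechanism v} (ε : M.Env) (v : V)
    (h : ∀ w, M.Reaches w v → mech w = mech' w) :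
    M.solve mech ε v = M.solve mech' ε v := by
  induction v using M.edge_wf.induction with
  | _ v ih =>
    rw [solve_apply, solve_apply, h v .refl]
    congr 1
    funext w hw
    exact ih w hw fun x hx => h x (hx.tail hw)

theorem val_of_ne (π : M.Policy) (ε : M.Env) {v : V} (h : v ≠ M.decision) :
    M.val π ε v = M.f v h (fun w _ => M.val π ε w) (ε v) := by
  rw [val, solve_apply, polMech_of_ne]

theorem val_decision (π : M.Policy) (ε : M.Env) :
    M.val π ε M.decision = π (M.ctx π ε) (ε M.decision) := by
  rw [val, solve_apply, polMech_decision]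
  rfl

theorem val_congr_policy (π π' : M.Policy) (ε : M.Env) {v : V}
    (h : ¬ M.Reaches M.decision v) : M.val π ε v = M.val π' ε v := by
  refine M.solve_congr ε v fun w hw => ?_
  have hne : w ≠ M.decision := by
    rintro rfl
    exact h hw
  rw [polMech_of_ne _ _ hne, polMech_of_ne _ _ hne]

theorem ctx_congr_policy (π π' : M.Policy) (ε : M.Env) : M.ctx π ε = M.ctx π' ε :=
  funext₂ fun w hw => M.val_congr_policy π π' ε fun h => M.acyclic w (.head' hw h)

theorem valDo_single_self (π : M.Policy) (X : V) (x : M.dom X) (ε : M.Env) :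
    M.valDo π (M.single X x) ε X = x := by
  rw [valDo, solve_apply, doMech_single_self]

theorem valDo_single_of_ne (π : M.Policy) {X v : V} (x : M.dom X) (ε : M.Env) (hX : v ≠ X)
    (h : v ≠ M.decision) :
    M.valDo π (M.single X x) ε v =
      M.f v h (fun w _ => M.valDo π (M.single X x) ε w) (ε v) := by
  rw [valDo, solve_apply, doMech_single_of_ne _ _ _ hX, polMech_of_ne]

theorem valDo_single_decision (π : M.Policy) {X : V} (x : M.dom X) (ε : M.Env)
    (hX : X ≠ M.decision) :
    M.valDo π (M.single X x) ε M.decision =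
      π (fun w _ => M.valDo π (M.single X x) ε w) (ε M.decision) := by
  rw [valDo, solve_apply, doMech_single_of_ne _ _ _ hX.symm, polMech_decision]

theorem valDo_single_of_not_reaches (π : M.Policy) {X v : V} (x : M.dom X) (ε : M.Env)
    (h : ¬ M.Reaches X v) : M.valDo π (M.single X x) ε v = M.val π ε v := by
  refine M.solve_congr ε v fun w hw => M.doMech_single_of_ne _ _ ?_
  rintro rfl
  exact h hw

variable {M} in
theorem Optimal.totUtil_eq_of_forall_le {π π' : M.Policy} (hπ : M.Optimal π)
    (h : ∀ ε, M.totUtil (M.val π ε) ≤ M.totUtil (M.val π' ε)) {ε : M.Env}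
    (hε : 0 < M.prob ε) : M.totUtil (M.val π ε) = M.totUtil (M.val π' ε) := by
  have hle (ε : M.Env) :
      M.prob ε * M.totUtil (M.val π ε) ≤ M.prob ε * M.totUtil (M.val π' ε) :=
    mul_le_mul_of_nonneg_left (h ε) (M.prob_nonneg ε)
  have hEU : M.EU π = M.EU π' := (Finset.sum_le_sum fun ε _ => hle ε).antisymm (hπ π')
  exact mul_left_cancel₀ hε.ne'
    ((Finset.sum_eq_sum_iff_of_le fun ε _ => hle ε).mp hEU ε (Finset.mem_univ ε))

theorem sum_prob_mul_solve (mech : ∀ v, M.Mechanism v) (F : (∀ v, M.dom v) → ℝ) :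
    ∑ ε : M.Env, M.prob ε * F (M.solve mech ε) =
      ∑ a : ∀ v, M.dom v, (∏ v, M.kernel (mech v) a (a v)) * F a := by
  have markov (a : ∀ v, M.dom v) : ∏ v, M.kernel (mech v) a (a v) =
      ∑ ε : M.Env, if M.solve mech ε = a then M.prob ε else 0 := by
    simp_rw [kernel, solve_eq_iff]
    rw [Finset.prod_univ_sum, Fintype.piFinset_univ]
    refine Finset.sum_congr rfl fun ε _ => ?_
    rw [Finset.prod_ite_zero]
    simp [prob]
  simp_rw [markov, Finset.sum_mul]
  rw [Finset.sum_comm]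
  simp

end SCIM

/-! ### Active paths -/

section ActivePaths

variable {V : Type} {E : V → V → Prop} {Z T : Set V} {a b c x y : V} {l : List V}

/-- An undirected path that is not d-separated by `Z`. -/
def IsActivePath (E : V → V → Prop) (Z : Set V) (p : List V) : Prop :=
  IsUPath E p ∧ ¬ BlockedPath E Z p

/-- Some vertex of `T` is d-connected to `y` by a path that remains active when it is prolonged
at `y` by any arrow pointing into `y`. -/
def DConnInto (E : V → V → Prop) (Z T : Set V) (y : V) : Prop :=
  ∃ l t, t ∈ T ∧ IsActivePath E Z (y :: l) ∧ (y :: l).getLast? = some t ∧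
    ∀ z ∈ l.head?, ∀ a, E a y → ¬ BlockedTriple E Z a y z

theorem isUPath_iff_isChain {p : List V} :
    IsUPath E p ↔ p ≠ [] ∧ p.Nodup ∧ p.IsChain (fun a b => E a b ∨ E b a) :=
  Iff.rfl

theorem blockedPath_cons_cons : BlockedPath E Z (a :: b :: l) ↔
    (∃ c ∈ l.head?, BlockedTriple E Z a b c) ∨ BlockedPath E Z (b :: l) := by
  constructor
  · rintro ⟨_ | ⟨_, l₁⟩, a', b', c', l₂, hl, h⟩
    · simp only [List.nil_append, List.cons.injEq] at hl
      obtain ⟨rfl, rfl, rfl⟩ := hl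
      exact .inl ⟨c', rfl, h⟩
    · exact .inr ⟨l₁, a', b', c', l₂, (List.cons.inj hl).2, h⟩
  · rintro (⟨c, hc, h⟩ | ⟨l₁, a', b', c', l₂, hl, h⟩)
    · obtain ⟨l', rfl⟩ := List.head?_eq_some_iff.mp hc
      exact ⟨[], a, b, c, l', rfl, h⟩
    · exact ⟨a :: l₁, a', b', c', l₂, by rw [hl, List.cons_append], h⟩

theorem isActivePath_singleton : IsActivePath E Z [a] := by
  refine ⟨⟨List.cons_ne_nil _ _, List.nodup_singleton a, List.isChain_singleton a⟩, ?_⟩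
  rintro ⟨l₁, a', b', c', l₂, hl, -⟩
  have := congrArg List.length hl
  simp only [List.length_cons, List.length_nil, List.length_append] at this
  lia

theorem isActivePath_cons_cons : IsActivePath E Z (a :: b :: l) ↔
    a ∉ b :: l ∧ (E a b ∨ E b a) ∧ (∀ c ∈ l.head?, ¬ BlockedTriple E Z a b c) ∧
      IsActivePath E Z (b :: l) := by
  simp only [IsActivePath, isUPath_iff_isChain, blockedPath_cons_cons, List.nodup_cons (a := a),
    List.isChain_cons_cons, ne_eq, reduceCtorEq, not_false_eq_true, true_and, not_or, not_exists,
    not_and]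
  tauto

theorem IsActivePath.of_append {l₁ l₂ : List V} (h : IsActivePath E Z (l₁ ++ l₂))
    (hl : l₂ ≠ []) : IsActivePath E Z l₂ := by
  obtain ⟨⟨-, hnd, hch⟩, hZ⟩ := h
  refine ⟨⟨hl, hnd.of_append_right, hch.right_of_append⟩, ?_⟩
  rintro ⟨l₃, a, b, c, l₄, rfl, habc⟩
  exact hZ ⟨l₁ ++ l₃, a, b, c, l₄, (List.append_assoc ..).symm, habc⟩

theorem not_dSep_singleton_iff : ¬ DSep E {y} T Z ↔
    ∃ l t, t ∈ T ∧ IsActivePath E Z (y :: l) ∧ (y :: l).getLast? = some t := by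
  simp only [DSep, Set.mem_singleton_iff, exists_eq_left, not_forall]
  constructor
  · rintro ⟨p, hp, hy, ⟨t, ht, hlast⟩, hZ⟩
    obtain ⟨l, rfl⟩ := List.head?_eq_some_iff.mp hy
    exact ⟨l, t, ht, ⟨hp, hZ⟩, hlast⟩
  · rintro ⟨l, t, ht, ⟨hp, hZ⟩, hlast⟩
    exact ⟨y :: l, hp, rfl, ⟨t, ht, hlast⟩, hZ⟩

theorem DConnInto.not_dSep (h : DConnInto E Z T y) : ¬ DSep E {y} T Z :=
  let ⟨l, t, ht, hl, hlast, _⟩ := h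
  not_dSep_singleton_iff.mpr ⟨l, t, ht, hl, hlast⟩

-- If `y` already lies on the path, the part of the path from `y` on does the job.
theorem IsActivePath.exists_cons (h : IsActivePath E Z (x :: l)) (hne : y ≠ x)
    (hadj : E y x ∨ E x y) (hx : ∀ z ∈ l.head?, ¬ BlockedTriple E Z y x z) :
    ∃ l', IsActivePath E Z (y :: l') ∧ (y :: l').getLast? = (x :: l).getLast? ∧
      (l' = x :: l ∨ ∀ z ∈ l'.head?, ∃ a, ¬ BlockedTriple E Z a y z) := by
  by_cases hy : y ∈ l
  · obtain ⟨l₁, l₂, rfl⟩ := List.append_of_mem hy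
    refine ⟨l₂, h.of_append (l₁ := x :: l₁) (List.cons_ne_nil _ _), ?_, .inr fun z hz => ?_⟩
    · rw [← List.cons_append, List.getLast?_append_cons]
    · obtain ⟨l₃, rfl⟩ := List.head?_eq_some_iff.mp hz
      obtain ⟨l₄, a, ha⟩ := List.eq_nil_or_concat (x :: l₁) |>.resolve_left (List.cons_ne_nil _ _)
      refine ⟨a, fun hb => h.2 ⟨l₄, a, y, z, l₃, ?_, hb⟩⟩
      rw [← List.cons_append, ha, List.concat_append]
  · refine ⟨x :: l, isActivePath_cons_cons.mpr ⟨?_, hadj, hx, h⟩, rfl, .inl rfl⟩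
    exact List.not_mem_cons_of_ne_of_not_mem hne hy

theorem dConnInto_of_not_dSep (h : ¬ DSep E {y} T Z) (hy : y ∉ Z)
    (hdesc : ∃ w ∈ Z, Relation.ReflTransGen E y w) : DConnInto E Z T y := by
  obtain ⟨l, t, ht, hl, hlast⟩ := not_dSep_singleton_iff.mp h
  obtain ⟨w, hw, hyw⟩ := hdesc
  refine ⟨l, t, ht, hl, hlast, fun z _ a _ => ?_⟩
  rintro (⟨-, hyZ⟩ | ⟨-, hd⟩)
  exacts [hy hyZ, hd w hyw hw]

section Acyclic

variable (hE : ∀ v, ¬ Relation.TransGen E v v)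
include hE

theorem isActivePath_of_isChain (hl : List.IsChain E (y :: l)) (hZ : ∀ v ∈ y :: l, v ∉ Z) :
    IsActivePath E Z (y :: l) := by
  induction l generalizing y with
  | nil => exact isActivePath_singleton
  | cons b l ih =>
    have hyb : E y b := hl.rel
    refine isActivePath_cons_cons.mpr
      ⟨fun hmem => hE y ?_, .inl hyb, fun c hc => ?_, ih hl.tail fun v hv => hZ v (.tail _ hv)⟩
    · exact List.rel_of_pairwise_cons (hl.imp fun _ _ => Relation.TransGen.single).pairwise hmem
    · obtain ⟨l', rfl⟩ := List.head?_eq_some_iff.mp hc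
      rintro (⟨-, hb⟩ | ⟨⟨-, hcb⟩, -⟩)
      · exact hZ b (.tail _ (.head _)) hb
      · exact hE b (.head hl.tail.rel (.single hcb))

theorem dConnInto_of_reflTransGen {t : V} (ht : t ∈ T) (hyt : Relation.ReflTransGen E y t)
    (hZ : ∀ w, Relation.ReflTransGen E y w → w ∉ Z) : DConnInto E Z T y := by
  obtain ⟨l, hl, hlast⟩ := List.exists_isChain_cons_of_relationReflTransGen hyt
  have hreach : ∀ v ∈ y :: l, Relation.ReflTransGen E y v := List.forall_mem_cons.mpr
    ⟨.refl, fun _ => List.rel_of_pairwise_cons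
      (hl.imp fun _ _ => Relation.ReflTransGen.single).pairwise⟩
  refine ⟨l, t, ht, isActivePath_of_isChain hE hl fun v hv => hZ v (hreach v hv), ?_, ?_⟩
  · rw [List.getLast?_eq_getLast_of_ne_nil (List.cons_ne_nil _ _), hlast]
  · intro z hz a _
    obtain ⟨l', rfl⟩ := List.head?_eq_some_iff.mp hz
    rintro (⟨-, hy⟩ | ⟨⟨-, hzy⟩, -⟩)
    · exact hZ y .refl hy
    · exact hE y (.head hl.rel (.single hzy))

theorem DConnInto.not_dSep_of_edge (h : DConnInto E Z T x) (hyx : E y x) :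
    ¬ DSep E {y} T Z := by
  obtain ⟨l, t, ht, hl, hlast, hx⟩ := h
  have hne : y ≠ x := by
    rintro rfl
    exact hE y (.single hyx)
  obtain ⟨l', hl', hlast', -⟩ := hl.exists_cons hne (.inl hyx) fun z hz => hx z hz y hyx
  exact not_dSep_singleton_iff.mpr ⟨l', t, ht, hl', hlast'.trans hlast⟩

theorem dConnInto_of_edge (h : ¬ DSep E {x} T Z) (hx : x ∉ Z) (hxy : E x y)
    (hdesc : ∃ w ∈ Z, Relation.ReflTransGen E y w) : DConnInto E Z T y := by
  obtain ⟨l, t, ht, hl, hlast⟩ := not_dSep_singleton_iff.mp h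
  obtain ⟨w, hw, hyw⟩ := hdesc
  have hne : y ≠ x := by
    rintro rfl
    exact hE y (.single hxy)
  have hx' : ∀ z ∈ l.head?, ¬ BlockedTriple E Z y x z := by
    rintro z - (⟨-, hxZ⟩ | ⟨⟨hyx, -⟩, -⟩)
    exacts [hx hxZ, hE x (.head hxy (.single hyx))]
  obtain ⟨l', hl', hlast', hl''⟩ := hl.exists_cons hne (.inr hxy) hx'
  refine ⟨l', t, ht, hl', hlast'.trans hlast, fun z hz a hay => ?_⟩
  rintro (⟨hcol, hyZ⟩ | ⟨-, hd⟩)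
  · have hzy : ¬ E z y := fun hzy => hcol ⟨hay, hzy⟩
    rcases hl'' with rfl | hl''
    · exact hzy (Option.some.inj hz ▸ hxy)
    · obtain ⟨b, hb⟩ := hl'' z hz
      exact hb (.inl ⟨fun h => hzy h.2, hyZ⟩)
  · exact hd w hyw hw

end Acyclic

end ActivePaths

/-! ### Requisite observations -/

namespace CID

variable {V : Type} (G : CID V)

/-- The family of `v`: the vertex itself together with its parents. -/
def family (v : V) : Set V := {v} ∪ {w | G.edge w v}

/-- The utility nodes that the decision can influence. -/
def Influenced (u : V) : Prop := u ∈ G.utility ∧ G.Reaches G.decision u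

/-- Ancestors of the decision or of an influenced utility node: the variables on which the
decision and the influenced utilities can depend. -/
def Relevant (v : V) : Prop :=
  G.Reaches v G.decision ∨ ∃ u, G.Influenced u ∧ G.Reaches v u

/-- Vertices connected to an influenced utility node in the moral graph on the relevant vertices
by a path avoiding the family of the decision; the moral graph is encoded by joining any two
vertices of a common family. -/
inductive Linked : V → Prop
  | base {u : V} : G.Influenced u → Linked u
  | step {v x y : V} : Linked x → y ∉ G.family G.decision → G.Relevant v →
      x ∈ G.family v → y ∈ G.family v → Linked y

/-- The relevant vertices whose family contains a linked vertex. -/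
def Touches (v : V) : Prop := G.Relevant v ∧ ∃ x, G.Linked x ∧ x ∈ G.family v

/-- The parents of the decision that share the family of a relevant vertex with a linked vertex:
the observations on which an optimal decision may depend. -/
def Requisite (w : V) : Prop := G.edge w G.decision ∧ ∃ v, G.Touches v ∧ w ∈ G.family v

/-- The decision together with the linked vertices: the variables over which the consequences of
a decision are averaged once the requisite observations are fixed. -/
def inner : Set V := {v | v = G.decision ∨ G.Linked v}

variable {G} {v w x y : V}

theorem not_reaches_of_edge (h : G.edge v w) : ¬ G.Reaches w v :=
  fun h' => G.acyclic v (.head' h h')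

theorem ne_of_edge (h : G.edge v w) : v ≠ w := by
  rintro rfl
  exact G.not_reaches_of_edge h .refl

theorem not_edge_of_edge (h : G.edge v w) : ¬ G.edge w v :=
  fun h' => G.not_reaches_of_edge h (.single h')

theorem notMem_utility_of_edge (h : G.edge v w) : v ∉ G.utility :=
  fun hu => G.utility_no_children v hu w h

theorem reaches_of_mem_family (h : x ∈ G.family v) : G.Reaches x v := by
  rcases h with rfl | h
  exacts [.refl, .single h]

theorem Relevant.of_reaches (h : G.Relevant v) (hx : G.Reaches x v) : G.Relevant x :=
  h.imp hx.trans fun ⟨u, hu, hv⟩ => ⟨u, hu, hx.trans hv⟩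

theorem Influenced.notMem_family_decision (h : G.Influenced v) : v ∉ G.family G.decision := by
  rintro (rfl | h')
  exacts [G.decision_not_utility h.1, notMem_utility_of_edge h' h.1]

theorem Linked.notMem_family_decision (h : G.Linked x) : x ∉ G.family G.decision := by
  cases h with
  | base h => exact h.notMem_family_decision
  | step _ h => exact h

theorem Linked.relevant (h : G.Linked x) : G.Relevant x := by
  cases h with
  | base h => exact .inr ⟨_, h, .refl⟩
  | step _ _ hv _ hy => exact hv.of_reaches (reaches_of_mem_family hy)

theorem Touches.ne_decision (h : G.Touches v) : v ≠ G.decision := by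
  rintro rfl
  obtain ⟨-, x, hx, hxv⟩ := h
  exact hx.notMem_family_decision hxv

theorem Linked.of_transGen_decision (hv : G.Relevant v)
    (hd : Relation.TransGen G.edge G.decision v) : G.Linked v := by
  rcases hv with hv | ⟨u, hu, hv⟩
  · exact (G.acyclic _ (hd.trans_left hv)).elim
  induction hv using Relation.ReflTransGen.head_induction_on with
  | refl => exact .base hu
  | @head a c hac hcu ih =>
    refine .step (ih (hd.tail hac)) (fun hf => ?_) (.inr ⟨u, hu, hcu⟩) (.inl rfl) (.inr hac)
    exact G.acyclic _ (hd.trans_left (reaches_of_mem_family hf))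

theorem notMem_inner_of_edge_decision (h : G.edge w G.decision) : w ∉ G.inner := by
  rintro (rfl | hl)
  exacts [ne_of_edge h rfl, hl.notMem_family_decision (.inr h)]

theorem Touches.mem_inner_or_requisite (hv : G.Touches v) (hw : w ∈ G.family v) :
    w ∈ G.inner ∨ G.Requisite w := by
  obtain ⟨hrel, x, hx, hxv⟩ := id hv
  by_cases hwD : w ∈ G.family G.decision
  · exact hwD.imp .inl fun h => ⟨h, v, hv, hw⟩
  · exact .inl (.inr (hx.step hwD hrel hxv hw))

theorem notMem_inner_of_not_touches (hne : v ≠ G.decision) (hv : G.Relevant v)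
    (ht : ¬ G.Touches v) (hw : w ∈ G.family v) : w ∉ G.inner := by
  rintro (rfl | hl)
  · have hdv : G.edge G.decision v := hw.resolve_left hne.symm
    exact ht ⟨hv, v, .of_transGen_decision hv (.single hdv), .inl rfl⟩
  · exact ht ⟨hv, w, hl, hw⟩

section DConnection

variable {W : V}

theorem Relevant.dConnInto (hv : G.Relevant v) (hvD : ¬ G.Reaches v G.decision) :
    DConnInto G.edge (G.family G.decision \ {W}) {u | G.Influenced u} v := by
  obtain ⟨u, hu, hvu⟩ := hv.resolve_left hvD
  exact dConnInto_of_reflTransGen G.acyclic hu hvu fun w hvw hw =>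
    hvD (hvw.trans (reaches_of_mem_family hw.1))

variable (hW : G.edge W G.decision)
include hW

theorem dConnInto_of_mem_family
    (hx : DConnInto G.edge (G.family G.decision \ {W}) {u | G.Influenced u} x)
    (hxD : x ∉ G.family G.decision) (hv : G.Relevant v) (hxv : x ∈ G.family v) :
    DConnInto G.edge (G.family G.decision \ {W}) {u | G.Influenced u} v := by
  rcases hxv with rfl | hxv
  · exact hx
  by_cases hvD : G.Reaches v G.decision
  · exact dConnInto_of_edge G.acyclic hx.not_dSep (fun h => hxD h.1) hxv
      ⟨_, ⟨.inl rfl, (ne_of_edge hW).symm⟩, hvD⟩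
  · exact hv.dConnInto hvD

omit hW in
theorem not_dSep_of_mem_family
    (hv : DConnInto G.edge (G.family G.decision \ {W}) {u | G.Influenced u} v)
    (hyv : y ∈ G.family v) :
    ¬ DSep G.edge {y} {u | G.Influenced u} (G.family G.decision \ {W}) := by
  rcases hyv with rfl | hyv
  exacts [hv.not_dSep, hv.not_dSep_of_edge G.acyclic hyv]

theorem Linked.dConnInto (h : G.Linked x) :
    DConnInto G.edge (G.family G.decision \ {W}) {u | G.Influenced u} x := by
  induction h with
  | base h =>
    refine dConnInto_of_reflTransGen G.acyclic h .refl fun w huw hw => ?_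
    rcases huw.cases_head with rfl | ⟨c, hc, -⟩
    exacts [h.notMem_family_decision hw.1, notMem_utility_of_edge hc h.1]
  | @step v x y hx hyD hv hxv hyv ih =>
    by_cases hy : G.Reaches y G.decision
    · have hvd := dConnInto_of_mem_family hW ih hx.notMem_family_decision hv hxv
      exact dConnInto_of_not_dSep (not_dSep_of_mem_family hvd hyv) (fun h => hyD h.1)
        ⟨_, ⟨.inl rfl, (ne_of_edge hW).symm⟩, hy⟩
    · exact (hv.of_reaches (reaches_of_mem_family hyv)).dConnInto hy

end DConnection

theorem Requisite.exists_not_dSep {W : V} (h : G.Requisite W) :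
    ∃ u, G.Influenced u ∧ ¬ DSep G.edge {W} {u} (G.family G.decision \ {W}) := by
  obtain ⟨hW, v, ⟨hv, x, hx, hxv⟩, hWv⟩ := h
  have hvd := dConnInto_of_mem_family hW (hx.dConnInto hW) hx.notMem_family_decision hv hxv
  obtain ⟨l, u, hu, hl, hlast⟩ := not_dSep_singleton_iff.mp (not_dSep_of_mem_family hvd hWv)
  exact ⟨u, hu, not_dSep_singleton_iff.mpr ⟨l, u, rfl, hl, hlast⟩⟩

theorem Requisite.riCriterion {W X : V} (h : G.Requisite W) (hX : G.Reaches X W) :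
    RICriterion G X :=
  let ⟨u, hu, hZ⟩ := h.exists_not_dSep
  ⟨W, h.1, u, hu.1, hX, hu.2, hZ⟩

end CID

/-! ### Optimal policies -/

section Resampling

variable {ι : Type*} {β : ι → Type*} [Fintype (∀ i, β i)] (S : Set ι) [∀ i, Decidable (i ∈ S)]

theorem sum_sum_piecewise {R : Type*} [AddCommMonoid R] (F : (∀ i, β i) → R) :
    ∑ a, ∑ c, F (S.piecewise c a) = Fintype.card (∀ i, β i) • ∑ a, F a := by
  have swap_swap : Function.Involutive
      fun x : (∀ i, β i) × (∀ i, β i) => (S.piecewise x.2 x.1, S.piecewise x.1 x.2) := by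
    rintro ⟨a, c⟩
    ext i <;> by_cases hi : i ∈ S <;> simp [hi]
  calc ∑ a, ∑ c, F (S.piecewise c a)
      = ∑ x : (∀ i, β i) × (∀ i, β i), F (S.piecewise x.2 x.1) :=
        (Fintype.sum_prod_type' _).symm
    _ = ∑ x : (∀ i, β i) × (∀ i, β i), F x.1 := Equiv.sum_comp (swap_swap.toPerm _) fun x => F x.1
    _ = ∑ _c : ∀ i, β i, ∑ a, F a := Fintype.sum_prod_type_right' fun a _ => F a
    _ = Fintype.card (∀ i, β i) • ∑ a, F a := by rw [Finset.sum_const, Finset.card_univ]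

theorem sum_le_sum_of_sum_piecewise_le {R : Type*} [AddCommMonoid R] [LinearOrder R]
    [IsOrderedCancelAddMonoid R] {F G : (∀ i, β i) → R}
    (h : ∀ a, ∑ c, F (S.piecewise c a) ≤ ∑ c, G (S.piecewise c a)) : ∑ a, F a ≤ ∑ a, G a := by
  cases isEmpty_or_nonempty (∀ i, β i)
  · simp
  · refine le_of_nsmul_le_nsmul_right (Fintype.card_ne_zero (α := ∀ i, β i)) ?_
    rw [← sum_sum_piecewise S, ← sum_sum_piecewise S]
    exact Finset.sum_le_sum fun a _ => h a

end Resampling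

namespace SCIM

variable {V : Type} (M : SCIM V)

/-- The total value of the utility nodes that the decision can influence. -/
noncomputable def influencedUtil (a : ∀ v, M.dom v) : ℝ :=
  ∑ u ∈ M.utility with M.Reaches M.decision u, M.utilVal u (a u)

/-- The structural functions with all variables that are not relevant made constant; the value at
the decision is a placeholder, to be overridden by a policy. -/
noncomputable def prunedMech : ∀ v, M.Mechanism v :=
  fun v => if h : v ≠ M.decision ∧ M.Relevant v then M.f v h.1 else
    fun _ _ => Classical.arbitrary (M.dom v)

theorem prunedMech_of_relevant {v : V} (hne : v ≠ M.decision) (hv : M.Relevant v) :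
    M.prunedMech v = M.f v hne :=
  dif_pos ⟨hne, hv⟩

theorem prunedMech_of_not_relevant {v : V} (hv : ¬ M.Relevant v) :
    M.prunedMech v = fun _ _ => Classical.arbitrary (M.dom v) :=
  dif_neg fun h => hv h.2

theorem kernel_prunedMech_congr {v : V} {a a' : ∀ v, M.dom v}
    (h : ∀ w ∈ M.family v, a w = a' w) :
    M.kernel (M.prunedMech v) a (a v) = M.kernel (M.prunedMech v) a' (a' v) := by
  rw [h v (.inl rfl)]
  exact M.kernel_congr _ (fun w hw => h w (.inr hw)) _

variable [Fintype V]

/-- The factors of the Markov factorization that do not involve linked vertices, apart from the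
factor of the decision. -/
noncomputable def weight (a : ∀ v, M.dom v) : ℝ :=
  ∏ v with ¬ M.Touches v ∧ v ≠ M.decision, M.kernel (M.prunedMech v) a (a v)

/-- The factors of the Markov factorization that involve linked vertices, times the influenced
utility. -/
noncomputable def reward (a : ∀ v, M.dom v) : ℝ :=
  (∏ v with M.Touches v, M.kernel (M.prunedMech v) a (a v)) * M.influencedUtil a

theorem weight_nonneg (a : ∀ v, M.dom v) : 0 ≤ M.weight a :=
  Finset.prod_nonneg fun _ _ => M.kernel_nonneg _ _ _

theorem weight_congr {a a' : ∀ v, M.dom v} (h : ∀ v ∉ M.inner, a v = a' v) :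
    M.weight a = M.weight a' := by
  refine Finset.prod_congr rfl fun v hv => ?_
  obtain ⟨ht, hne⟩ := (Finset.mem_filter.mp hv).2
  by_cases hrel : M.Relevant v
  · exact M.kernel_prunedMech_congr fun w hw =>
      h w (CID.notMem_inner_of_not_touches hne hrel ht hw)
  · have hv : v ∉ M.inner := by
      rintro (hd | hl)
      exacts [hne hd, hrel hl.relevant]
    rw [h v hv, M.prunedMech_of_not_relevant hrel]
    rfl

theorem reward_congr {a a' : ∀ v, M.dom v} (h : ∀ v, v ∈ M.inner ∨ M.Requisite v → a v = a' v) :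
    M.reward a = M.reward a' := by
  unfold reward influencedUtil
  congr 1
  · refine Finset.prod_congr rfl fun v hv => M.kernel_prunedMech_congr fun w hw => h w ?_
    exact (Finset.mem_filter.mp hv).2.mem_inner_or_requisite hw
  · refine Finset.sum_congr rfl fun u hu => ?_
    rw [h u (.inl (.inr (.base (Finset.mem_filter.mp hu))))]

variable [DecidableEq V]

theorem EU_le_iff (π π' : M.Policy) : M.EU π ≤ M.EU π' ↔
    ∑ ε, M.prob ε * M.influencedUtil (M.val π ε) ≤
      ∑ ε, M.prob ε * M.influencedUtil (M.val π' ε) := by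
  have totUtil_eq (π₁ : M.Policy) (ε : M.Env) : M.totUtil (M.val π₁ ε) =
      M.influencedUtil (M.val π₁ ε) +
        ∑ u ∈ M.utility with ¬ M.Reaches M.decision u, M.utilVal u (M.val π ε u) := by
    rw [totUtil, influencedUtil, ← Finset.sum_filter_add_sum_filter_not _ (M.Reaches M.decision)]
    congr 1
    refine Finset.sum_congr rfl fun u hu => ?_
    rw [M.val_congr_policy π₁ π ε (Finset.mem_filter.mp hu).2]
  simp only [EU, totUtil_eq, mul_add, Finset.sum_add_distrib, add_le_add_iff_right]

theorem influencedUtil_solve_update_prunedMech (π : M.Policy) (ε : M.Env) :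
    M.influencedUtil (M.solve (Function.update M.prunedMech M.decision π) ε) =
      M.influencedUtil (M.val π ε) := by
  refine Finset.sum_congr rfl fun u hu => ?_
  rw [val, M.solve_congr (mech' := M.polMech π) ε u fun w hw => ?_]
  by_cases hne : w = M.decision
  · subst hne
    rw [Function.update_self, polMech_decision]
  · have hrel : M.Relevant w := .inr ⟨u, Finset.mem_filter.mp hu, hw⟩
    rw [Function.update_of_ne hne, M.prunedMech_of_relevant hne hrel, polMech_of_ne]

theorem prod_kernel_update_prunedMech (π : M.Policy) (a : ∀ v, M.dom v) :
    ∏ v, M.kernel (Function.update M.prunedMech M.decision π v) a (a v) =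
      M.kernel π a (a M.decision) * M.weight a *
        ∏ v with M.Touches v, M.kernel (M.prunedMech v) a (a v) := by
  have hD : M.decision ∈ Finset.univ.filter fun v => ¬ M.Touches v :=
    Finset.mem_filter.mpr ⟨Finset.mem_univ _, fun h => h.ne_decision rfl⟩
  have prod_erase : ∏ v ∈ (Finset.univ.filter fun v => ¬ M.Touches v).erase M.decision,
      M.kernel (Function.update M.prunedMech M.decision π v) a (a v) = M.weight a := by
    refine (Finset.prod_congr (Finset.ext fun v => ?_) fun v hv => ?_).symm
    · simp only [Finset.mem_erase, Finset.mem_filter, Finset.mem_univ, true_and, and_comm]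
    · rw [Function.update_of_ne (Finset.ne_of_mem_erase hv)]
  have prod_touches : ∏ v with M.Touches v,
      M.kernel (Function.update M.prunedMech M.decision π v) a (a v) =
        ∏ v with M.Touches v, M.kernel (M.prunedMech v) a (a v) := by
    refine Finset.prod_congr rfl fun v hv => ?_
    rw [Function.update_of_ne (Finset.mem_filter.mp hv).2.ne_decision]
  rw [← Finset.prod_filter_mul_prod_filter_not _ M.Touches, ← Finset.mul_prod_erase _ _ hD,
    prod_erase, prod_touches, Function.update_self, mul_comm]

theorem sum_prob_mul_influencedUtil (π : M.Policy) :
    ∑ ε, M.prob ε * M.influencedUtil (M.val π ε) =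
      ∑ a : ∀ v, M.dom v, M.kernel π a (a M.decision) * (M.weight a * M.reward a) := by
  simp_rw [← influencedUtil_solve_update_prunedMech, sum_prob_mul_solve,
    prod_kernel_update_prunedMech, reward, mul_assoc]

/-- The reward of the decision `d`, summed over all values of the inner variables while the
others keep the values prescribed by `a`. -/
noncomputable def averagedReward (a : ∀ v, M.dom v) (d : M.dom M.decision) : ℝ :=
  ∑ c : ∀ v, M.dom v, if c M.decision = d then M.reward (M.inner.piecewise c a) else 0

theorem averagedReward_congr {a a' : ∀ v, M.dom v} (h : ∀ w, M.Requisite w → a w = a' w) :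
    M.averagedReward a = M.averagedReward a' := by
  funext d
  refine Finset.sum_congr rfl fun c _ => ?_
  rw [M.reward_congr (a' := M.inner.piecewise c a') fun v hv => ?_]
  by_cases hi : v ∈ M.inner
  · rw [Set.piecewise_eq_of_mem _ _ _ hi, Set.piecewise_eq_of_mem _ _ _ hi]
  · rw [Set.piecewise_eq_of_notMem _ _ _ hi, Set.piecewise_eq_of_notMem _ _ _ hi,
      h v (hv.resolve_left hi)]

theorem sum_piecewise_kernel_mul_weight_mul_reward (π : M.Policy) (a : ∀ v, M.dom v) :
    ∑ c : ∀ v, M.dom v, M.kernel π (M.inner.piecewise c a) (M.inner.piecewise c a M.decision) *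
        (M.weight (M.inner.piecewise c a) * M.reward (M.inner.piecewise c a)) =
      M.weight a * ∑ d, M.kernel π a d * M.averagedReward a d := by
  have hk (c : ∀ v, M.dom v) : M.kernel π (M.inner.piecewise c a) = M.kernel π a :=
    funext fun d => M.kernel_congr π (fun w hw =>
      Set.piecewise_eq_of_notMem _ _ _ (CID.notMem_inner_of_edge_decision hw)) d
  have hw (c : ∀ v, M.dom v) : M.weight (M.inner.piecewise c a) = M.weight a :=
    M.weight_congr fun v hv => Set.piecewise_eq_of_notMem _ _ _ hv
  have hD (c : ∀ v, M.dom v) : M.inner.piecewise c a M.decision = c M.decision :=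
    Set.piecewise_eq_of_mem _ _ _ (.inl rfl)
  simp_rw [hk, hw, hD, averagedReward, Finset.mul_sum]
  rw [Finset.sum_comm]
  refine Finset.sum_congr rfl fun c _ => ?_
  simp only [mul_ite, mul_zero, Finset.sum_ite_eq, Finset.mem_univ, if_true]
  ring

theorem EU_le_of_sum_kernel_mul_averagedReward_le {π π' : M.Policy}
    (h : ∀ a, ∑ d, M.kernel π a d * M.averagedReward a d ≤
      ∑ d, M.kernel π' a d * M.averagedReward a d) : M.EU π ≤ M.EU π' := by
  rw [EU_le_iff, sum_prob_mul_influencedUtil, sum_prob_mul_influencedUtil]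
  refine sum_le_sum_of_sum_piecewise_le M.inner fun a => ?_
  rw [sum_piecewise_kernel_mul_weight_mul_reward, sum_piecewise_kernel_mul_weight_mul_reward]
  exact mul_le_mul_of_nonneg_left (h a) (M.weight_nonneg a)

theorem exists_optimal_requisite : ∃ π : M.Policy, M.Optimal π ∧
    ∀ pa pa' : M.Ctx, (∀ w h, M.Requisite w → pa w h = pa' w h) → π pa = π pa' := by
  choose argmax le_argmax using fun g : M.dom M.decision → ℝ => Finite.exists_max g
  let extend (pa : M.Ctx) : ∀ v, M.dom v :=
    fun w => if h : M.edge w M.decision then pa w h else Classical.arbitrary _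
  have extend_apply (pa : M.Ctx) {w : V} (h : M.edge w M.decision) : extend pa w = pa w h :=
    dif_pos h
  let best : M.Policy := fun pa _ => argmax (M.averagedReward (extend pa))
  refine ⟨best, fun π => M.EU_le_of_sum_kernel_mul_averagedReward_le fun a => ?_,
    fun pa pa' h => ?_⟩
  · have best_apply : M.averagedReward (extend fun w _ => a w) = M.averagedReward a :=
      M.averagedReward_congr fun w hw => extend_apply (fun w _ => a w) hw.1
    calc ∑ d, M.kernel π a d * M.averagedReward a d
        ≤ ∑ d, M.kernel π a d * M.averagedReward a (argmax (M.averagedReward a)) :=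
          Finset.sum_le_sum fun d _ =>
            mul_le_mul_of_nonneg_left (le_argmax _ d) (M.kernel_nonneg π a d)
      _ = M.averagedReward a (argmax (M.averagedReward a)) := by
          rw [← Finset.sum_mul, sum_kernel, one_mul]
      _ = ∑ d, M.kernel best a d * M.averagedReward a d := by
          simp only [best, kernel_deterministic, best_apply, ite_mul, one_mul, zero_mul,
            Finset.sum_ite_eq, Finset.mem_univ, if_true]
  · have havg : M.averagedReward (extend pa) = M.averagedReward (extend pa') :=
      M.averagedReward_congr fun w hw => by
        rw [extend_apply _ hw.1, extend_apply _ hw.1, h w hw.1 hw]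
    simp only [best, havg]

variable {M}

theorem ResponseIncentive.exists_requisite {X : V} (hX : X ≠ M.decision)
    (h : M.ResponseIncentive X) : ∃ W, M.Requisite W ∧ M.Reaches X W := by
  obtain ⟨π, hopt, hπ⟩ := M.exists_optimal_requisite
  obtain ⟨x, ε, hne⟩ := h π hopt
  by_contra! hunreached
  refine hne ?_
  rw [valDo_single_decision _ _ _ _ hX, val_decision]
  exact congrFun (hπ _ _ fun w _ hreq =>
    M.valDo_single_of_not_reaches π x ε (hunreached w hreq)) _

theorem ResponseIncentive.riCriterion {X : V} (hX : X ≠ M.decision)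
    (h : M.ResponseIncentive X) : RICriterion M.toCID X :=
  let ⟨_, hW, hXW⟩ := h.exists_requisite hX
  hW.riCriterion hXW

end SCIM

/-! ### Signal paths -/

theorem exists_path_of_not_dSep {V : Type} {E : V → V → Prop} {Z : Set V} {s t : V}
    (h : ¬ DSep E {s} {t} Z) : ∃ (n : ℕ) (p : ℕ → V), p 0 = s ∧ p n = t ∧
      Set.InjOn p (Set.Iic n) ∧ (∀ i < n, E (p i) (p (i + 1)) ∨ E (p (i + 1)) (p i)) ∧
      ∀ i, i + 2 ≤ n → ¬ BlockedTriple E Z (p i) (p (i + 1)) (p (i + 2)) := by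
  obtain ⟨l, _, rfl, ⟨hpath, hZ⟩, hlast⟩ := not_dSep_singleton_iff.mp h
  obtain ⟨-, hnd, hch⟩ := isUPath_iff_isChain.mp hpath
  let p : ℕ → V := fun i => (s :: l).getD i s
  have p_eq {i : ℕ} (hi : i ≤ l.length) : p i = (s :: l)[i]'(Nat.lt_succ_of_le hi) :=
    List.getD_eq_getElem _ _ _
  refine ⟨l.length, p, rfl, ?_, fun i hi j hj hij => ?_, fun i hi => ?_,
    fun i hi hb => hZ ⟨(s :: l).take i, _, _, _, (s :: l).drop (i + 3), ?_, hb⟩⟩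
  · rw [List.getLast?_eq_getElem?, List.getElem?_eq_some_iff] at hlast
    rw [p_eq le_rfl]
    exact hlast.2
  · rw [p_eq hi, p_eq hj] at hij
    exact hnd.getElem_inj_iff.mp hij
  · rw [p_eq hi.le, p_eq (Nat.succ_le_of_lt hi)]
    exact List.isChain_iff_getElem.mp hch i _
  · rw [p_eq (by lia), p_eq (by lia), p_eq (by lia), ← List.drop_eq_getElem_cons,
      ← List.drop_eq_getElem_cons, ← List.drop_eq_getElem_cons, List.take_append_drop]

/-- An undirected path from an observation to an influenced utility node that is active given the
other members of the family of the decision. Only the values of `node` up to `length` matter. -/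
structure SignalPath {V : Type} (G : CID V) where
  length : ℕ
  node : ℕ → V
  injOn : Set.InjOn node (Set.Iic length)
  adj : ∀ i < length, G.edge (node i) (node (i + 1)) ∨ G.edge (node (i + 1)) (node i)
  observed : G.edge (node 0) G.decision
  influenced : G.Influenced (node length)
  unblocked : ∀ i, i + 2 ≤ length →
    ¬ BlockedTriple G.edge (G.family G.decision \ {node 0}) (node i) (node (i + 1)) (node (i + 2))

namespace SignalPath

variable {V : Type} {G : CID V}

theorem exists_of_not_dSep {W u : V} (hW : G.edge W G.decision) (hu : G.Influenced u)
    (h : ¬ DSep G.edge {W} {u} (G.family G.decision \ {W})) :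
    ∃ S : SignalPath G, S.node 0 = W := by
  obtain ⟨n, p, rfl, rfl, hinj, hadj, hZ⟩ := exists_path_of_not_dSep h
  exact ⟨⟨n, p, hinj, hadj, hW, hu, hZ⟩, rfl⟩

variable (S : SignalPath G) {i j m : ℕ} {v : V}

/-- The tail of the `i`-th edge of the path. -/
noncomputable def tail (i : ℕ) : V :=
  if G.edge (S.node i) (S.node (i + 1)) then S.node i else S.node (i + 1)

/-- The head of the `i`-th edge of the path. -/
noncomputable def head (i : ℕ) : V :=
  if G.edge (S.node i) (S.node (i + 1)) then S.node (i + 1) else S.node i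

/-- Two edges of the path point to the vertex. -/
def Collider (v : V) : Prop :=
  ∃ i < S.length, ∃ j < S.length, i ≠ j ∧ S.head i = v ∧ S.head j = v

variable {S}

theorem edge_tail_head (hi : i < S.length) : G.edge (S.tail i) (S.head i) := by
  unfold tail head
  split_ifs with h
  exacts [h, (S.adj i hi).resolve_left h]

theorem edge_tail_of_head_eq (hi : i < S.length) (h : S.head i = v) : G.edge (S.tail i) v :=
  h ▸ edge_tail_head hi

theorem tail_or_head (hi : i = m ∨ i + 1 = m) : S.tail i = S.node m ∨ S.head i = S.node m := by
  unfold tail head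
  split_ifs <;> rcases hi with rfl | rfl <;> simp

theorem index_of_tail_or_head (hi : i < S.length) (hm : m ≤ S.length)
    (h : S.tail i = S.node m ∨ S.head i = S.node m) : i = m ∨ i + 1 = m := by
  have inj {k : ℕ} (hk : k ≤ S.length) (hkm : S.node k = S.node m) : k = m := S.injOn hk hm hkm
  unfold tail head at h
  split_ifs at h
  exacts [h.imp (inj hi.le) (inj hi), h.symm.imp (inj hi.le) (inj hi)]

theorem exists_node_eq_head (hi : i < S.length) : ∃ m ≤ S.length, S.node m = S.head i := by
  unfold head
  split_ifs
  exacts [⟨i + 1, hi, rfl⟩, ⟨i, hi.le, rfl⟩]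

theorem exists_node_eq_tail (hi : i < S.length) : ∃ m ≤ S.length, S.node m = S.tail i := by
  unfold tail
  split_ifs
  exacts [⟨i, hi.le, rfl⟩, ⟨i + 1, hi, rfl⟩]

theorem length_pos : 0 < S.length := by
  refine Nat.pos_of_ne_zero fun h => CID.notMem_utility_of_edge S.observed ?_
  rw [← h]
  exact S.influenced.1

theorem eq_or_eq_of_head_eq (hv : S.head i = v) (hi : i < S.length) (hw : S.head j = v)
    (hj : j < S.length) (hij : i ≠ j) {k : ℕ} (hk : k < S.length)
    (h : S.tail k = v ∨ S.head k = v) : k = i ∨ k = j := by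
  obtain ⟨m, hm, rfl⟩ := hv ▸ exists_node_eq_head hi
  have := index_of_tail_or_head hi hm (.inr hv)
  have := index_of_tail_or_head hj hm (.inr hw)
  have := index_of_tail_or_head hk hm h
  lia

theorem not_collider_tail (hi : i < S.length) : ¬ S.Collider (S.tail i) := by
  rintro ⟨j, hj, k, hk, hjk, hv, hw⟩
  rcases eq_or_eq_of_head_eq hv hj hw hk hjk hi (.inl rfl) with rfl | rfl
  exacts [CID.ne_of_edge (edge_tail_head hj) hv.symm, CID.ne_of_edge (edge_tail_head hk) hw.symm]

theorem not_collider_first : ¬ S.Collider (S.node 0) := by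
  rintro ⟨j, hj, k, hk, hjk, hv, hw⟩
  have := index_of_tail_or_head hj (Nat.zero_le _) (.inr hv)
  have := index_of_tail_or_head hk (Nat.zero_le _) (.inr hw)
  lia

theorem not_collider_last : ¬ S.Collider (S.node S.length) := by
  rintro ⟨j, hj, k, hk, hjk, hv, hw⟩
  have := index_of_tail_or_head hj le_rfl (.inr hv)
  have := index_of_tail_or_head hk le_rfl (.inr hw)
  lia

theorem isCollider_iff (hi : i + 2 ≤ S.length) :
    IsCollider G.edge (S.node i) (S.node (i + 1)) (S.node (i + 2)) ↔
      S.Collider (S.node (i + 1)) := by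
  constructor
  · rintro ⟨h₁, h₂⟩
    exact ⟨i, by lia, i + 1, hi, by lia, if_pos h₁, if_neg (CID.not_edge_of_edge h₂)⟩
  · rintro ⟨j, hj, k, hk, hjk, hv, hw⟩
    have hj' := index_of_tail_or_head hj (Nat.le_of_succ_le hi) (.inr hv)
    have hk' := index_of_tail_or_head hk (Nat.le_of_succ_le hi) (.inr hw)
    have head_eq : S.head i = S.node (i + 1) ∧ S.head (i + 1) = S.node (i + 1) := by
      obtain ⟨rfl, h⟩ | ⟨h, rfl⟩ : j = i + 1 ∧ k = i ∨ j = i ∧ k = i + 1 := by lia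
      exacts [⟨h ▸ hw, hv⟩, ⟨h ▸ hv, hw⟩]
    have edge_fst := edge_tail_head (Nat.lt_of_succ_lt hi)
    have edge_snd := edge_tail_head hi
    rw [head_eq.1] at edge_fst
    rw [head_eq.2] at edge_snd
    unfold tail at edge_fst edge_snd
    split_ifs at edge_fst edge_snd with h₁ h₂ h₂
    · exact (CID.ne_of_edge edge_snd rfl).elim
    · exact ⟨h₁, edge_snd⟩
    · exact (CID.ne_of_edge edge_fst rfl).elim
    · exact (CID.ne_of_edge edge_fst rfl).elim

theorem Collider.reaches_decision (hv : S.Collider v) : G.Reaches v G.decision := by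
  obtain ⟨i, hi, rfl⟩ : ∃ i, i + 2 ≤ S.length ∧ S.node (i + 1) = v := by
    obtain ⟨j, hj, k, hk, hjk, rfl, hw⟩ := id hv
    obtain ⟨m, hm, hmv⟩ := exists_node_eq_head hj
    have := index_of_tail_or_head hj hm (.inr hmv.symm)
    have := index_of_tail_or_head hk hm (.inr (hw.trans hmv.symm))
    exact ⟨m - 1, by lia, by rwa [Nat.sub_add_cancel (by lia)]⟩
  by_contra hD
  exact S.unblocked i hi (.inr ⟨(isCollider_iff hi).mpr hv, fun w hw hwD =>
    hD (hw.trans (CID.reaches_of_mem_family hwD.1))⟩)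

theorem collider_of_mem_family_decision (hi : i + 2 ≤ S.length)
    (h : S.node (i + 1) ∈ G.family G.decision) : S.Collider (S.node (i + 1)) := by
  by_contra hc
  refine S.unblocked i hi (.inl ⟨(isCollider_iff hi).not.mpr hc, h, fun h0 => ?_⟩)
  exact Nat.succ_ne_zero i (S.injOn (Nat.le_of_succ_le hi) (Nat.zero_le _) h0)

theorem collider_of_edge_decision (hm : m ≤ S.length) (hm0 : m ≠ 0)
    (h : G.edge (S.node m) G.decision) : S.Collider (S.node m) := by
  have hlt : m < S.length :=
    hm.lt_of_ne fun hl => CID.notMem_utility_of_edge (hl ▸ h) S.influenced.1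
  obtain ⟨i, rfl⟩ := Nat.exists_eq_succ_of_ne_zero hm0
  exact collider_of_mem_family_decision hlt (.inr h)

theorem node_ne_decision (hm : m ≤ S.length) : S.node m ≠ G.decision := by
  intro h
  obtain rfl | hm0 := eq_or_ne m 0
  · exact CID.ne_of_edge S.observed h
  obtain rfl | hlt := hm.eq_or_lt
  · exact S.influenced.notMem_family_decision (.inl h)
  obtain ⟨i, rfl⟩ := Nat.exists_eq_succ_of_ne_zero hm0
  have hc := (isCollider_iff hlt).mpr (collider_of_mem_family_decision hlt (.inl h))
  have hnext : S.Collider (S.node (i + 2)) :=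
    collider_of_edge_decision hlt (Nat.succ_ne_zero _) (h ▸ hc.2)
  refine not_collider_tail hlt ?_
  rwa [tail, if_neg (CID.not_edge_of_edge hc.2)]

theorem tail_ne_decision (hi : i < S.length) : S.tail i ≠ G.decision := by
  obtain ⟨m, hm, h⟩ := exists_node_eq_tail hi
  exact h ▸ node_ne_decision hm

theorem Collider.ne_decision (hv : S.Collider v) : v ≠ G.decision := by
  obtain ⟨i, hi, -, -, -, rfl, -⟩ := hv
  obtain ⟨m, hm, h⟩ := exists_node_eq_head hi
  exact h ▸ node_ne_decision hm

theorem Collider.notMem_utility (hv : S.Collider v) : v ∉ G.utility := by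
  intro hu
  obtain h | ⟨w, hw, -⟩ := hv.reaches_decision.cases_head
  exacts [hv.ne_decision h, CID.notMem_utility_of_edge hw hu]

end SignalPath

/-! ### The guessing model -/

namespace SignalPath

/-- The values of the variables of the model: either absent or a vector of bits indexed by the
variables. -/
abbrev Sig (V : Type) : Type := Option (V → ZMod 2)

/-- The bits of a value; those of an absent value are zero. -/
def bits {V : Type} (s : Sig V) : V → ZMod 2 := s.getD 0

/-- An injective embedding of the values into the reals that makes absence the least value. -/
noncomputable def level {V : Type} [Fintype V] : Sig V → ℝ
  | none => -1
  | some b => (Fintype.equivFin (V → ZMod 2) b : ℕ)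

theorem level_none_lt {V : Type} [Fintype V] (b : V → ZMod 2) :
    level (none : Sig V) < level (some b) :=
  (neg_one_lt_zero (R := ℝ)).trans_le (Nat.cast_nonneg _)

theorem level_injective {V : Type} [Fintype V] : Function.Injective (level (V := V)) := by
  rintro (_ | b) (_ | c) h
  · rfl
  · exact ((level_none_lt c).ne h).elim
  · exact ((level_none_lt b).ne' h).elim
  · exact congrArg some ((Fintype.equivFin _).injective (Fin.ext (Nat.cast_injective h)))

theorem eq_of_eq_one_iff {a b : ZMod 2} (h : a = 1 ↔ b = 1) : a = b := by
  revert a b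
  decide

variable {V : Type} {G : CID V} (S : SignalPath G)

variable [DecidableEq V]

/-- The bits that `v` sends, given the values of its parents and the noise: its own bit is the sum
of the bits arriving along the path, or the noise if there are none, and it relays the bits of the
decision and of the colliders. -/
noncomputable def message (v : V) (pa : ∀ w, G.edge w v → Sig V) (e : ZMod 2) : V → ZMod 2 :=
  fun k =>
    if k = v then
      if ∃ i < S.length, S.head i = v then
        ∑ i : {i : Fin S.length // S.head i = v},
          bits (pa _ (edge_tail_of_head_eq i.1.2 i.2)) (S.tail i)
      else e
    else if (k = G.decision ∨ S.Collider k) ∧ ∃ w h, bits (pa w h) k = 1 then 1 else 0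

/-- The structural functions of the model: the utility node at the end of the path checks its own
bit against that of the decision, the other utility nodes are constant, and every other variable
sends its message unless a parent other than the decision is absent. -/
noncomputable def mechanism (v : V) (pa : ∀ w, G.edge w v → Sig V) (e : ZMod 2) : Sig V :=
  if v ∈ G.utility then
    if v = S.node S.length ∧ S.message v pa e v = S.message v pa e G.decision then some 0 else none
  else if ∃ w h, w ≠ G.decision ∧ pa w h = none then none
  else some (S.message v pa e)

variable [Fintype V]

/-- The model in which the decision has to guess the bit at the end of the path. -/
noncomputable def model : SCIM V where
  toCID := G
  dom _ := Sig V
  dom_fintype _ := inferInstance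
  dom_nonempty _ := inferInstance
  edom _ := ZMod 2
  edom_fintype _ := inferInstance
  edom_nonempty _ := inferInstance
  utilVal _ := level
  utilVal_inj _ _ := level_injective
  f v _ := S.mechanism v
  μ _ _ := 1 / 2
  μ_nonneg _ _ := by positivity
  μ_sum _ := by simp

/-- The values of the variables of the model, as a non-dependent function. -/
noncomputable def value (π : S.model.Policy) (ε : V → ZMod 2) : V → Sig V :=
  S.model.val π ε

/-- The message that `v` sends in the model. -/
noncomputable def sent (π : S.model.Policy) (ε : V → ZMod 2) (v : V) : V → ZMod 2 :=
  S.message v (fun w _ => S.value π ε w) (ε v)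

/-- The bit transmitted along the `i`-th edge of the path. -/
noncomputable def edgeBit (π : S.model.Policy) (ε : V → ZMod 2) (i : ℕ) : ZMod 2 :=
  S.sent π ε (S.tail i) (S.tail i)

variable {S} {π π' : S.model.Policy} {ε ε' : V → ZMod 2} {i j m : ℕ} {v w k : V}

theorem value_of_ne (hv : v ≠ G.decision) :
    S.value π ε v = S.mechanism v (fun w _ => S.value π ε w) (ε v) :=
  S.model.val_of_ne π ε hv

theorem value_eq_some (hv : v ≠ G.decision) (hu : v ∉ G.utility) :
    S.value π ε v = some (S.sent π ε v) := by
  induction v using S.model.edge_wf.induction with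
  | _ v ih =>
    rw [value_of_ne hv, mechanism, if_neg hu, if_neg, sent]
    rintro ⟨w, hw, hwD, h⟩
    rw [ih w hw hwD (CID.notMem_utility_of_edge hw)] at h
    exact Option.some_ne_none _ h

theorem bits_value (hv : v ≠ G.decision) (hu : v ∉ G.utility) :
    bits (S.value π ε v) = S.sent π ε v := by
  rw [value_eq_some hv hu]
  rfl

theorem sent_self_of_head_eq (hi : i < S.length) (hv : S.head i = v) :
    S.sent π ε v v = ∑ i : {i : Fin S.length // S.head i = v}, S.edgeBit π ε i := by
  rw [sent, message, if_pos rfl, if_pos ⟨i, hi, hv⟩]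
  refine Finset.sum_congr rfl fun j _ => ?_
  have hju := CID.notMem_utility_of_edge (edge_tail_head j.1.2)
  rw [bits_value (tail_ne_decision j.1.2) hju, edgeBit]

theorem sent_self_of_not_head (h : ∀ i < S.length, S.head i ≠ v) : S.sent π ε v v = ε v := by
  rw [sent, message, if_pos rfl, if_neg]
  rintro ⟨i, hi, hv⟩
  exact h i hi hv

theorem sent_self_of_not_collider (hc : ¬ S.Collider v) (hi : i < S.length)
    (h : S.tail i = v ∨ S.head i = v) : S.sent π ε v v = S.edgeBit π ε i := by
  rcases h with rfl | h
  · rfl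
  have : Subsingleton {i : Fin S.length // S.head i = v} :=
    ⟨fun j k => Subtype.ext <| Fin.ext <| by_contra fun hne =>
      hc ⟨j, j.1.2, k, k.1.2, hne, j.2, k.2⟩⟩
  rw [sent_self_of_head_eq hi h, Fintype.sum_subsingleton _ ⟨⟨i, hi⟩, h⟩]

theorem sent_self_of_collider (hi : i < S.length) (hj : j < S.length) (hij : i ≠ j)
    (hv : S.head i = v) (hw : S.head j = v) :
    S.sent π ε v v = S.edgeBit π ε i + S.edgeBit π ε j := by
  rw [sent_self_of_head_eq hi hv]
  refine Fintype.sum_eq_add (⟨⟨i, hi⟩, hv⟩ : {i : Fin S.length // S.head i = v}) ⟨⟨j, hj⟩, hw⟩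
    ?_ fun k hk => ?_
  · simpa only [ne_eq, Subtype.mk.injEq, Fin.mk.injEq] using hij
  · refine absurd (eq_or_eq_of_head_eq hv hi hw hj hij k.1.2 (.inr k.2)) ?_
    simpa only [ne_eq, Subtype.ext_iff, Fin.ext_iff, not_or] using hk

theorem sent_of_ne (hkv : k ≠ v) : S.sent π ε v k =
    if (k = G.decision ∨ S.Collider k) ∧ ∃ w, ∃ _ : G.edge w v, bits (S.value π ε w) k = 1
    then 1 else 0 := by
  rw [sent, message, if_neg hkv]
  congr

theorem sent_eq_one_iff (hk : k = G.decision ∨ S.Collider k) (hkv : k ≠ v)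
    (hD : k = G.decision ∨ ¬ G.Reaches G.decision v) :
    S.sent π ε v k = 1 ↔ G.Reaches k v ∧ bits (S.value π ε k) k = 1 := by
  induction v using S.model.edge_wf.induction with
  | _ v ih =>
    have parent (w : V) (hw : G.edge w v) :
        bits (S.value π ε w) k = 1 ↔ G.Reaches k w ∧ bits (S.value π ε k) k = 1 := by
      obtain rfl | hkw := eq_or_ne k w
      · exact (and_iff_right .refl).symm
      have hwD : w ≠ G.decision := by
        rintro rfl
        exact hD.elim hkw fun h => h (.single hw)
      rw [bits_value hwD (CID.notMem_utility_of_edge hw)]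
      exact ih w hw hkw (hD.imp_right fun h hDw => h (hDw.tail hw))
    rw [sent_of_ne hkv, ite_eq_left_iff, CID.Reaches, Relation.ReflTransGen.cases_tail_iff]
    constructor
    · intro h
      obtain ⟨-, w, hw, hkw⟩ := not_imp_comm.mp h zero_ne_one
      exact ((parent w hw).mp hkw).imp_left fun hr => .inr ⟨w, hr, hw⟩
    · rintro ⟨hvk | ⟨w, hr, hw⟩, hbit⟩ h
      exacts [(hkv hvk.symm).elim, (h ⟨hk, w, hw, (parent w hw).mpr ⟨hr, hbit⟩⟩).elim]

theorem bits_value_eq_one_iff (hk : S.Collider k) (hu : v ∉ G.utility)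
    (hD : ¬ G.Reaches G.decision v) :
    bits (S.value π ε v) k = 1 ↔ G.Reaches k v ∧ S.sent π ε k k = 1 := by
  have hvD : v ≠ G.decision := by
    rintro rfl
    exact hD .refl
  obtain rfl | hkv := eq_or_ne k v
  · rw [bits_value hvD hu, and_iff_right .refl]
  · rw [bits_value hvD hu, sent_eq_one_iff (.inr hk) hkv (.inr hD),
      bits_value hk.ne_decision hk.notMem_utility]

theorem sent_collider_congr (h : S.model.ctx π ε = S.model.ctx π' ε') (hk : S.Collider k) :
    S.sent π ε k k = S.sent π' ε' k k := by
  obtain hDk | ⟨w, hkw, hw⟩ := hk.reaches_decision.cases_tail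
  · exact (hk.ne_decision hDk.symm).elim
  have sent_iff (π : S.model.Policy) (ε : V → ZMod 2) :
      S.sent π ε k k = 1 ↔ bits (S.value π ε w) k = 1 := by
    rw [bits_value_eq_one_iff hk (CID.notMem_utility_of_edge hw)
      (CID.not_reaches_of_edge hw), and_iff_right hkw]
  have hval : S.value π ε w = S.value π' ε' w := congrFun₂ h w hw
  exact eq_of_eq_one_iff ((sent_iff π ε).trans (hval ▸ (sent_iff π' ε').symm))

theorem edgeBit_congr (h : S.model.ctx π ε = S.model.ctx π' ε') (hi : i < S.length) :
    S.edgeBit π ε i = S.edgeBit π' ε' i := by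
  induction i with
  | zero =>
    have edgeBit_eq (π : S.model.Policy) (ε : V → ZMod 2) :
        S.edgeBit π ε 0 = bits (S.value π ε (S.node 0)) (S.node 0) := by
      rw [← sent_self_of_not_collider not_collider_first hi (tail_or_head (.inl rfl)),
        bits_value (CID.ne_of_edge S.observed) (CID.notMem_utility_of_edge S.observed)]
    have hval : S.value π ε (S.node 0) = S.value π' ε' (S.node 0) := congrFun₂ h _ S.observed
    rw [edgeBit_eq, edgeBit_eq, hval]
  | succ i ih =>
    have hi' : i < S.length := Nat.lt_of_succ_lt hi
    have left := tail_or_head (S := S) (.inr rfl : i = i + 1 ∨ i + 1 = i + 1)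
    have right := tail_or_head (S := S) (.inl rfl : i + 1 = i + 1 ∨ i + 1 + 1 = i + 1)
    by_cases hc : S.Collider (S.node (i + 1))
    · have hhead := left.resolve_left fun ht => not_collider_tail hi' (ht ▸ hc)
      have hhead' := right.resolve_left fun ht => not_collider_tail hi (ht ▸ hc)
      have sum_congr := sent_collider_congr h hc
      rw [sent_self_of_collider hi' hi i.succ_ne_self.symm hhead hhead',
        sent_self_of_collider hi' hi i.succ_ne_self.symm hhead hhead', ih hi'] at sum_congr
      exact add_left_cancel sum_congr
    · rw [← sent_self_of_not_collider hc hi right, ← sent_self_of_not_collider hc hi right,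
        sent_self_of_not_collider hc hi' left, sent_self_of_not_collider hc hi' left, ih hi']

theorem sent_last : S.sent π ε (S.node S.length) (S.node S.length) =
    S.edgeBit π ε (S.length - 1) :=
  sent_self_of_not_collider not_collider_last (Nat.sub_one_lt length_pos.ne')
    (tail_or_head (.inr (Nat.sub_add_cancel length_pos)))

theorem sent_last_congr (h : S.model.ctx π ε = S.model.ctx π' ε') :
    S.sent π ε (S.node S.length) (S.node S.length) =
      S.sent π' ε' (S.node S.length) (S.node S.length) := by
  rw [sent_last, sent_last, edgeBit_congr h (Nat.sub_one_lt length_pos.ne')]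

variable (S) in
theorem exists_policy_guess : ∃ π : S.model.Policy, ∀ ε,
    bits (S.value π ε G.decision) G.decision =
      S.sent π ε (S.node S.length) (S.node S.length) := by
  let π₀ : S.model.Policy := fun _ _ => (none : Sig V)
  let lastBit (ε : V → ZMod 2) : ZMod 2 := S.sent π₀ ε (S.node S.length) (S.node S.length)
  have determined : lastBit.FactorsThrough (S.model.ctx π₀) := fun _ _ => sent_last_congr
  let π : S.model.Policy := fun pa _ =>
    (some fun _ => Function.extend (S.model.ctx π₀) lastBit 0 pa : Sig V)
  refine ⟨π, fun ε => ?_⟩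
  have hctx : S.model.ctx π ε = S.model.ctx π₀ ε := S.model.ctx_congr_policy π π₀ ε
  calc bits (S.value π ε G.decision) G.decision
      = Function.extend (S.model.ctx π₀) lastBit 0 (S.model.ctx π ε) := by
        rw [value, show S.model.val π ε G.decision = _ from S.model.val_decision π ε]
        rfl
    _ = lastBit ε := (congrArg _ hctx).trans (determined.extend_apply 0 ε)
    _ = _ := sent_last_congr hctx.symm

theorem value_utility (hv : v ∈ G.utility) : S.value π ε v =
    if v = S.node S.length ∧ S.sent π ε (S.node S.length) (S.node S.length) =
      bits (S.value π ε G.decision) G.decision then some 0 else none := by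
  have hD : G.decision ≠ v := by
    rintro rfl
    exact G.decision_not_utility hv
  rw [value_of_ne hD.symm, mechanism, if_pos hv]
  refine if_congr (and_congr_right ?_) rfl rfl
  rintro rfl
  have relayed : S.sent π ε (S.node S.length) G.decision =
      bits (S.value π ε G.decision) G.decision := by
    refine eq_of_eq_one_iff ?_
    rw [sent_eq_one_iff (.inl rfl) hD (.inl rfl), and_iff_right S.influenced.2]
  rw [← relayed, sent]

theorem bits_decision_of_optimal (hπ : S.model.Optimal π) :
    bits (S.value π ε G.decision) G.decision =
      S.sent π ε (S.node S.length) (S.node S.length) := by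
  obtain ⟨π₀, hπ₀⟩ := S.exists_policy_guess
  have value_guess (ε : V → ZMod 2) {v : V} (hv : v ∈ G.utility) :
      S.value π₀ ε v = if v = S.node S.length then some 0 else none :=
    (value_utility hv).trans (if_congr (and_iff_left (hπ₀ ε).symm) rfl rfl)
  have value_le (ε : V → ZMod 2) (v : V) (hv : v ∈ G.utility) :
      level (S.value π ε v) ≤ level (S.value π₀ ε v) := by
    rw [value_utility hv, value_guess ε hv]
    split_ifs with h₁ h₂ h₂
    exacts [le_rfl, (h₂ h₁.1).elim, (level_none_lt 0).le, le_rfl]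
  have hprob : 0 < S.model.prob ε := Finset.prod_pos fun _ _ => one_half_pos
  have totUtil_eq : S.model.totUtil (S.model.val π ε) = S.model.totUtil (S.model.val π₀ ε) :=
    hπ.totUtil_eq_of_forall_le (fun ε => Finset.sum_le_sum (value_le ε)) hprob
  have last_eq : S.value π ε (S.node S.length) = S.value π₀ ε (S.node S.length) :=
    level_injective ((Finset.sum_eq_sum_iff_of_le (value_le ε)).mp totUtil_eq _ S.influenced.1)
  rw [value_utility S.influenced.1, value_guess ε S.influenced.1, if_pos rfl] at last_eq
  by_contra hne
  rw [if_neg fun h => hne h.2.symm] at last_eq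
  exact Option.some_ne_none _ last_eq.symm

variable (S) in
/-- The noise that is `c` on the path and zero elsewhere. -/
noncomputable def pathNoise (c : ZMod 2) : V → ZMod 2 :=
  fun v => if ∃ m ≤ S.length, S.node m = v then c else 0

variable {c : ZMod 2}

theorem edgeBit_pathNoise (hi : i < S.length) : S.edgeBit π (S.pathNoise c) i = c := by
  induction hv : S.tail i using S.model.edge_wf.induction generalizing i with
  | _ v ih =>
    subst hv
    by_cases hhead : ∃ j < S.length, S.head j = S.tail i
    · obtain ⟨j, hj, hji⟩ := hhead
      exact (sent_self_of_not_collider (not_collider_tail hi) hj (.inr hji)).trans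
        (ih _ (edge_tail_of_head_eq hj hji) hj rfl)
    · rw [edgeBit, sent_self_of_not_head fun j hj hji => hhead ⟨j, hj, hji⟩]
      exact if_pos (exists_node_eq_tail hi)

theorem sent_collider_pathNoise (hk : S.Collider k) : S.sent π (S.pathNoise c) k k = 0 := by
  obtain ⟨i, hi, j, hj, hij, hv, hw⟩ := hk
  rw [sent_self_of_collider hi hj hij hv hw, edgeBit_pathNoise hi, edgeBit_pathNoise hj,
    CharTwo.add_self_eq_zero]

theorem value_pathNoise_of_observed (hw : G.edge w G.decision) (hw0 : w ≠ S.node 0) :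
    S.value π (S.pathNoise c) w = some 0 := by
  have hwu : w ∉ G.utility := CID.notMem_utility_of_edge hw
  have hwD : w ≠ G.decision := CID.ne_of_edge hw
  have hDw : ¬ G.Reaches G.decision w := CID.not_reaches_of_edge hw
  rw [value_eq_some hwD hwu]
  refine congrArg some (funext fun k => eq_of_eq_one_iff (iff_of_false ?_ zero_ne_one))
  by_cases hc : S.Collider k
  · rw [← bits_value hwD hwu, bits_value_eq_one_iff hc hwu hDw, sent_collider_pathNoise hc]
    exact fun h => zero_ne_one h.2
  obtain rfl | hkw := eq_or_ne k w
  · have off_path : ¬ ∃ m ≤ S.length, S.node m = k := by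
      rintro ⟨m, hm, rfl⟩
      exact hc (collider_of_edge_decision hm (fun h0 => hw0 (congrArg S.node h0)) hw)
    have off_path_head (i : ℕ) (hi : i < S.length) (h : S.head i = k) : False :=
      off_path (h ▸ exists_node_eq_head hi)
    rw [sent_self_of_not_head off_path_head, pathNoise, if_neg off_path]
    exact zero_ne_one
  by_cases hkD : k = G.decision
  · subst hkD
    rw [sent_eq_one_iff (.inl rfl) hkw (.inl rfl)]
    exact fun h => hDw h.1
  · rw [sent_of_ne hkw, if_neg fun h => h.1.elim hkD hc]
    exact zero_ne_one

theorem valDo_none_of_reaches {X : V} (h : G.Reaches X v) (hu : v ∉ G.utility)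
    (hD : ¬ G.Reaches G.decision v) :
    S.model.valDo π (S.model.single X (none : Sig V)) ε v = (none : Sig V) := by
  induction h with
  | refl => exact S.model.valDo_single_self π X _ ε
  | @tail w v _ hwv ih =>
    obtain rfl | hvX := eq_or_ne v X
    · exact S.model.valDo_single_self π v _ ε
    have hvD : v ≠ G.decision := by
      rintro rfl
      exact hD .refl
    refine (S.model.valDo_single_of_ne π _ ε hvX hvD).trans ?_
    refine (if_neg hu).trans (if_pos ⟨w, hwv, ?_, ?_⟩)
    · rintro rfl
      exact hD (.single hwv)
    · exact ih (CID.notMem_utility_of_edge hwv) fun h => hD (h.tail hwv)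

variable {X : V}

theorem valDo_none_pathNoise_congr (hr : G.Reaches X (S.node 0)) (hw : G.edge w G.decision)
    (c c' : ZMod 2) :
    S.model.valDo π (S.model.single X (none : Sig V)) (S.pathNoise c) w =
      S.model.valDo π (S.model.single X (none : Sig V)) (S.pathNoise c') w := by
  have hwu : w ∉ G.utility := CID.notMem_utility_of_edge hw
  have hDw : ¬ G.Reaches G.decision w := CID.not_reaches_of_edge hw
  by_cases hXw : G.Reaches X w
  · exact (valDo_none_of_reaches hXw hwu hDw).trans (valDo_none_of_reaches hXw hwu hDw).symm
  have unaffected (c : ZMod 2) :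
      S.model.valDo π (S.model.single X (none : Sig V)) (S.pathNoise c) w =
        some (0 : V → ZMod 2) := by
    refine (S.model.valDo_single_of_not_reaches π _ _ hXw).trans
      (value_pathNoise_of_observed hw ?_)
    rintro rfl
    exact hXw hr
  exact (unaffected c).trans (unaffected c').symm

variable (S) in
theorem responseIncentive (hr : G.Reaches X (S.node 0)) : S.model.ResponseIncentive X := by
  intro π hπ
  by_contra! hno
  have hX : X ≠ G.decision := by
    rintro rfl
    exact CID.not_reaches_of_edge S.observed hr
  have noise_decision (c : ZMod 2) : S.pathNoise c G.decision = 0 :=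
    if_neg fun ⟨_, hm, h⟩ => node_ne_decision hm h
  have decision_eq_policy (c : ZMod 2) : S.value π (S.pathNoise c) G.decision =
      π (fun w _ => S.model.valDo π (S.model.single X (none : Sig V)) (S.pathNoise c) w)
        (0 : ZMod 2) := by
    rw [← noise_decision c]
    exact (hno none (S.pathNoise c)).symm.trans (S.model.valDo_single_decision π _ _ hX)
  have decision_eq : S.value π (S.pathNoise 0) G.decision =
      S.value π (S.pathNoise 1) G.decision := by
    rw [decision_eq_policy, decision_eq_policy]
    exact congrArg (fun pa => π pa (0 : ZMod 2))
      (funext₂ fun w hw => valDo_none_pathNoise_congr hr hw 0 1)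
  have guess (c : ZMod 2) : bits (S.value π (S.pathNoise c) G.decision) G.decision = c := by
    rw [bits_decision_of_optimal hπ, sent_last,
      edgeBit_pathNoise (Nat.sub_one_lt length_pos.ne')]
  refine zero_ne_one (α := ZMod 2) ?_
  rw [← guess 0, decision_eq, guess 1]

end SignalPath

/-- **Response incentive graphical criterion** (Theorem: soundness and completeness).
A single-decision CID `G` is compatible with a response incentive on a variable `X ≠ D`
iff there are a parent `W` of `D` and a utility node `U` with a directed path `X ⇝ W`,
a directed path `D ⇝ U`, and `W` d-connected to `U` given `({D} ∪ Pa_D) \ {W}`. -/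
theorem response_incentive_graphical_criterion
    {V : Type} [Fintype V] [DecidableEq V] (G : CID V) (X : V) (hX : X ≠ G.decision) :
    (∃ M : SCIM V, M.toCID = G ∧ M.ResponseIncentive X) ↔ RICriterion G X := by
  constructor
  · rintro ⟨M, rfl, h⟩
    exact h.riCriterion hX
  · rintro ⟨W, hW, u, hu, hXW, hDu, hsep⟩
    obtain ⟨S, rfl⟩ := SignalPath.exists_of_not_dSep hW ⟨hu, hDu⟩ hsep
    exact ⟨S.model, rfl, S.responseIncentive hXW⟩
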